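/- arXiv:2603.26399 — 2 statements merged into one kernel-verified Lean document; each statement's English description precedes it below -/
import Mathlib

section
/- For every integer r ≥ 1, ζ*(2, 1, 1, …, 1) with r ones appended, interpreted via the limit ζ*(2, {1}^{r−1}, 2, {1}^∞), equals (r+1)ζ(r+2); i.e., the infinite multiple zeta-star value with index (2, {1}^{r−1}, 2, 1, 1, …) equals (r+1)ζ(r+2). -/
open scoped BigOperators

/-- The set of weakly decreasing tuples of positive integers of length `r`. -/
def DecTuple (r : ℕ) : Set (Fin r → ℕ) :=
  {f | (∀ i, 1 ≤ f i) ∧ ∀ i j : Fin r, i ≤ j → f j ≤ f i}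

/-- The multiple zeta-star value of an index `k`. -/
noncomputable def zetaStar {r : ℕ} (k : Fin r → ℕ) : ℝ :=
  ∑' f : DecTuple r, ∏ i, (((f : Fin r → ℕ) i : ℝ) ^ (k i))⁻¹


/-! ### Complete homogeneous sums in `1, 1/2, …, 1/n` -/

noncomputable def Hh : ℕ → ℕ → ℝ
  | 0, _ => 1
  | (a+1), n => ∑ j ∈ Finset.Icc 1 n, ((j : ℝ))⁻¹ * Hh a j

lemma Hh_zero (n : ℕ) : Hh 0 n = 1 := rfl

lemma Hh_succ (a n : ℕ) : Hh (a+1) n = ∑ j ∈ Finset.Icc 1 n, ((j : ℝ))⁻¹ * Hh a j := rfl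

lemma Hh_succ_succ (a n : ℕ) :
    Hh (a+1) (n+1) = Hh (a+1) n + ((n:ℝ)+1)⁻¹ * Hh a (n+1) := by
  rw [Hh_succ, Finset.sum_Icc_succ_top (by omega), ← Hh_succ]
  push_cast
  rfl

lemma Hh_succ_zero (a : ℕ) : Hh (a+1) 0 = 0 := by simp [Hh_succ]

lemma Hh_nonneg (a : ℕ) : ∀ n, 0 ≤ Hh a n := by
  induction a with
  | zero => intro n; simp [Hh_zero]
  | succ a ih =>
    intro n
    rw [Hh_succ]
    exact Finset.sum_nonneg fun j _ => mul_nonneg (by positivity) (ih j)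

lemma Hh_le (a : ℕ) : ∀ n, 1 ≤ n → Hh a n ≤ n := by
  induction a with
  | zero => intro n hn; simpa [Hh_zero] using hn
  | succ a ih =>
    intro n hn
    rw [Hh_succ]
    calc _ ≤ ∑ j ∈ Finset.Icc 1 n, (1:ℝ) := by
          apply Finset.sum_le_sum
          intro j hj
          have hj1 : 1 ≤ j := (Finset.mem_Icc.1 hj).1
          have : (0:ℝ) < j := by exact_mod_cast hj1
          rw [inv_mul_le_iff₀ this]
          simpa using ih j hj1
      _ = n := by simp

lemma Hh_le_sqrt (a : ℕ) : ∀ n, 1 ≤ n → Hh a n ≤ 2 ^ a * Real.sqrt n := by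
  induction a with
  | zero =>
    intro n hn
    simp only [Hh_zero, pow_zero, one_mul]
    rw [Real.one_le_sqrt]
    exact_mod_cast hn
  | succ a ih =>
    have key : ∀ n : ℕ, Hh (a+1) n ≤ 2 ^ (a+1) * Real.sqrt n := by
      intro n
      induction n with
      | zero => simp [Hh_succ_zero]
      | succ n ihn =>
        rw [Hh_succ_succ]
        have h1 := ih (n+1) (by omega)
        have hpos : (0:ℝ) < (n:ℝ)+1 := by positivity
        have hs : Real.sqrt ((n:ℝ)+1) * Real.sqrt ((n:ℝ)+1) = (n:ℝ)+1 :=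
          Real.mul_self_sqrt hpos.le
        have hs0 : Real.sqrt (n:ℝ) * Real.sqrt (n:ℝ) = (n:ℝ) :=
          Real.mul_self_sqrt (by positivity)
        have hsp : 0 < Real.sqrt ((n:ℝ)+1) := Real.sqrt_pos.2 hpos
        have hinv : ((n:ℝ)+1)⁻¹ * Real.sqrt ((n:ℝ)+1) ≤
            2 * (Real.sqrt ((n:ℝ)+1) - Real.sqrt n) := by
          rw [inv_mul_le_iff₀ hpos]
          set x := Real.sqrt ((n:ℝ)+1)
          set y := Real.sqrt (n:ℝ)
          have : 1 ≤ 2 * (x * (x - y)) := by nlinarith [sq_nonneg (x-y)]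
          rw [← hs]
          nlinarith
        push_cast at h1 ⊢
        have h2 : ((n:ℝ)+1)⁻¹ * Hh a (n+1) ≤
            2 ^ a * (2 * (Real.sqrt ((n:ℝ)+1) - Real.sqrt n)) := by
          calc _ ≤ ((n:ℝ)+1)⁻¹ * (2 ^ a * Real.sqrt ((n:ℝ)+1)) := by gcongr
            _ = 2 ^ a * (((n:ℝ)+1)⁻¹ * Real.sqrt ((n:ℝ)+1)) := by ring
            _ ≤ _ := by gcongr
        calc _ ≤ 2 ^ (a+1) * Real.sqrt n + _ := add_le_add ihn h2
          _ = _ := by ring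
    intro n _
    exact key n

lemma Hh_mono_step (a : ℕ) : ∀ n, 1 ≤ n → Hh a n ≤ Hh (a+1) n := by
  induction a with
  | zero =>
    intro n hn
    rw [Hh_zero, Hh_succ]
    have : (1:ℝ) = ((1:ℕ):ℝ)⁻¹ * Hh 0 1 := by simp [Hh_zero]
    rw [this]
    exact Finset.single_le_sum (f := fun j : ℕ => ((j : ℝ))⁻¹ * Hh 0 j)
      (fun j _ => mul_nonneg (by positivity) (Hh_nonneg 0 j)) (Finset.mem_Icc.2 ⟨le_rfl, hn⟩)
  | succ a ih =>
    intro n hn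
    rw [Hh_succ, Hh_succ (a+1)]
    apply Finset.sum_le_sum
    intro j hj
    exact mul_le_mul_of_nonneg_left (ih j (Finset.mem_Icc.1 hj).1) (by positivity)

lemma Hh_tendsto : ∀ n, Filter.Tendsto (fun t => Hh t (n+1)) Filter.atTop
    (nhds ((n:ℝ)+1)) := by
  intro n
  induction n with
  | zero =>
    have : ∀ t, Hh t (0+1) = 1 := by
      intro t
      induction t with
      | zero => rfl
      | succ t ih => rw [Hh_succ_succ, Hh_succ_zero, ih]; simp
    simp only [this]
    simp
  | succ n ih =>
    have hmono : Monotone (fun t => Hh t (n+1+1)) :=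
      monotone_nat_of_le_succ fun t => Hh_mono_step t _ (by omega)
    have hbdd : BddAbove (Set.range fun t => Hh t (n+1+1)) :=
      ⟨((n+1+1 : ℕ):ℝ), by rintro _ ⟨t, rfl⟩; exact Hh_le t _ (by omega)⟩
    have hL := tendsto_atTop_ciSup hmono hbdd
    set L := ⨆ t, Hh t (n+1+1)
    have h1 := (Filter.tendsto_add_atTop_iff_nat 1).2 hL
    have h2 := (Filter.tendsto_add_atTop_iff_nat 1).2 ih
    have h3 := h2.add (hL.const_mul ((((n+1:ℕ):ℝ)+1)⁻¹))
    have h4 := tendsto_nhds_unique h1 (h3.congr fun t => (Hh_succ_succ t (n+1)).symm)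
    have : L = ((n+1:ℕ):ℝ)+1 := by
      push_cast at h4 ⊢
      field_simp at h4
      have hp : (0:ℝ) < (n:ℝ)+1 := by positivity
      have : ((n:ℝ)+1) * (L - (n+1+1)) = 0 := by nlinarith
      rcases mul_eq_zero.1 this with h | h
      · linarith
      · linarith
    rw [← this]
    exact hL

/-! ### Power series -/

noncomputable def Vv (a : ℝ) : PowerSeries ℝ := PowerSeries.mk fun r => (a ^ (r+1))⁻¹

noncomputable def uu (a : ℝ) : PowerSeries ℝ := PowerSeries.C a - PowerSeries.X

lemma Vv_mul_uu (a : ℝ) (ha : a ≠ 0) : Vv a * uu a = 1 := by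
  ext r
  rw [uu, mul_sub, map_sub, PowerSeries.coeff_mul_C]
  cases r with
  | zero => simp [Vv, ha]
  | succ r =>
    rw [PowerSeries.coeff_succ_mul_X, PowerSeries.coeff_one]
    simp only [Vv, PowerSeries.coeff_mk]
    rw [if_neg (by omega)]
    field_simp
    ring

noncomputable def Pp (m : ℕ) : ℕ → PowerSeries ℝ
  | 0 => 1
  | (n+1) => PowerSeries.C ((n:ℝ)+1) * Pp m n * Vv ((n:ℝ)+1+m)

lemma Pp_succ (m n : ℕ) : Pp m (n+1) = PowerSeries.C ((n:ℝ)+1) * Pp m n * Vv ((n:ℝ)+1+m) := rfl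

lemma Pp_succ_mul (m n : ℕ) :
    Pp m (n+1) * uu ((n:ℝ)+1+m) = PowerSeries.C ((n:ℝ)+1) * Pp m n := by
  rw [Pp_succ, mul_assoc, Vv_mul_uu _ (by positivity), mul_one]

lemma Pp_shift (m n : ℕ) :
    Pp (m+1) n * uu ((n:ℝ)+1+m) = Pp m n * uu ((m:ℝ)+1) := by
  induction n with
  | zero =>
    simp only [Pp]
    congr 2
    push_cast; ring
  | succ n ih =>
    have h1 := Pp_succ_mul (m+1) n
    have e : ((n:ℝ)+1+((m+1:ℕ):ℝ)) = (((n+1:ℕ):ℝ)+1+m) := by push_cast; ring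
    rw [e] at h1
    rw [h1, Pp_succ]
    have h2 := Vv_mul_uu ((n:ℝ)+1+m) (by positivity)
    linear_combination (-PowerSeries.C ((n:ℝ)+1) * Pp (m+1) n) * h2 +
      (PowerSeries.C ((n:ℝ)+1) * Vv ((n:ℝ)+1+m)) * ih

lemma coeff_Pp_zero_zero (m : ℕ) : PowerSeries.coeff 0 (Pp m 0) = 1 := by
  simp [Pp]

lemma coeff_Pp_succ_zero (m r : ℕ) : PowerSeries.coeff (r+1) (Pp m 0) = 0 := by
  simp [Pp, PowerSeries.coeff_one]

lemma coeff_Pp_zero (m n : ℕ) : ((n:ℝ)+1+m) * PowerSeries.coeff 0 (Pp m (n+1)) =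
    ((n:ℝ)+1) * PowerSeries.coeff 0 (Pp m n) := by
  have h := congrArg (PowerSeries.coeff 0) (Pp_succ_mul m n)
  rw [uu, mul_sub, map_sub, PowerSeries.coeff_mul_C, PowerSeries.coeff_C_mul] at h
  simp only [PowerSeries.coeff_zero_mul_X] at h
  linarith

lemma coeff_Pp_succ (m r n : ℕ) : ((n:ℝ)+1+m) * PowerSeries.coeff (r+1) (Pp m (n+1)) =
    ((n:ℝ)+1) * PowerSeries.coeff (r+1) (Pp m n) + PowerSeries.coeff r (Pp m (n+1)) := by
  have h := congrArg (PowerSeries.coeff (r+1)) (Pp_succ_mul m n)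
  rw [uu, mul_sub, map_sub, PowerSeries.coeff_mul_C, PowerSeries.coeff_C_mul,
    PowerSeries.coeff_succ_mul_X] at h
  linarith

lemma coeff_Pp_eq_Hh (r : ℕ) : ∀ n, PowerSeries.coeff r (Pp 0 n) = Hh r n := by
  induction r with
  | zero =>
    intro n
    induction n with
    | zero => rw [coeff_Pp_zero_zero]; rfl
    | succ n ih =>
      have h := coeff_Pp_zero 0 n
      rw [ih] at h
      have hp : (0:ℝ) < (n:ℝ)+1 := by positivity
      simp only [Hh_zero, Nat.cast_zero, add_zero] at h ⊢
      exact mul_left_cancel₀ hp.ne' h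
  | succ r ihr =>
    intro n
    induction n with
    | zero => rw [coeff_Pp_succ_zero, Hh_succ_zero]
    | succ n ih =>
      have h := coeff_Pp_succ 0 r n
      rw [ih, ihr] at h
      have hp : (0:ℝ) < (n:ℝ)+1 := by positivity
      rw [Hh_succ_succ]
      simp only [Nat.cast_zero, add_zero] at h
      apply mul_left_cancel₀ hp.ne'
      rw [h]
      field_simp

lemma coeff_Pp_nonneg (m r : ℕ) : ∀ n, 0 ≤ PowerSeries.coeff r (Pp m n) := by
  induction r with
  | zero =>
    intro n
    induction n with
    | zero => rw [coeff_Pp_zero_zero]; exact zero_le_one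
    | succ n ih =>
      have h := coeff_Pp_zero m n
      have hp : (0:ℝ) < (n:ℝ)+1+m := by positivity
      refine nonneg_of_mul_nonneg_right (b := _) (a := (n:ℝ)+1+m) ?_ hp
      rw [h]; positivity
  | succ r ihr =>
    intro n
    induction n with
    | zero => rw [coeff_Pp_succ_zero]
    | succ n ih =>
      have h := coeff_Pp_succ m r n
      have hp : (0:ℝ) < (n:ℝ)+1+m := by positivity
      refine nonneg_of_mul_nonneg_right (b := _) (a := (n:ℝ)+1+m) ?_ hp
      rw [h]
      have := ihr (n+1)
      positivity

lemma coeff_Pp_le (m r : ℕ) : ∀ n,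
    ((m:ℝ)+1) * PowerSeries.coeff r (Pp m (n+1)) ≤ Hh r (n+1) := by
  have hm : (0:ℝ) < (m:ℝ)+1 := by positivity
  have hm0 : (0:ℝ) ≤ m := by positivity
  induction r with
  | zero =>
    intro n
    induction n with
    | zero =>
      have h := coeff_Pp_zero m 0
      rw [coeff_Pp_zero_zero] at h
      simp only [Hh_zero]
      simp at h ⊢
      linarith
    | succ n ih =>
      have h := coeff_Pp_zero m (n+1)
      have h0 := coeff_Pp_nonneg m 0 (n+1+1)
      simp only [Hh_zero] at ih ⊢
      push_cast at h
      have hp : (0:ℝ) < (n:ℝ)+1+1 := by positivity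
      have : ((n:ℝ)+1+1) * PowerSeries.coeff 0 (Pp m (n+1+1)) ≤
         ((n:ℝ)+1+1) * PowerSeries.coeff 0 (Pp m (n+1)) := by nlinarith
      have := le_of_mul_le_mul_left this hp
      nlinarith
  | succ r ihr =>
    intro n
    induction n with
    | zero =>
      have h := coeff_Pp_succ m r 0
      have h2 := ihr 0
      have h0 := coeff_Pp_nonneg m r (0+1)
      rw [coeff_Pp_succ_zero] at h
      rw [Hh_succ_succ, Hh_succ_zero]
      simp at h h2 h0 ⊢
      nlinarith
    | succ n ih =>
      have h := coeff_Pp_succ m r (n+1)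
      have h2 := ihr (n+1)
      have h0 := coeff_Pp_nonneg m (r+1) (n+1+1)
      have hp : (0:ℝ) < (n:ℝ)+1+1 := by positivity
      rw [Hh_succ_succ]
      push_cast at h ⊢
      apply le_of_mul_le_mul_left _ hp
      have e : ((n:ℝ)+1+1) * (Hh (r+1) (n+1) + ((n:ℝ)+1+1)⁻¹ * Hh r (n+1+1)) =
        ((n:ℝ)+1+1) * Hh (r+1) (n+1) + Hh r (n+1+1) := by field_simp
      rw [e]
      calc _ ≤ ((m:ℝ)+1) * (((n:ℝ)+1+1+m) * PowerSeries.coeff (r+1) (Pp m (n+1+1))) := by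
              have : 0 ≤ ((m:ℝ)+1) * (m * PowerSeries.coeff (r+1) (Pp m (n+1+1))) := by positivity
              linarith
        _ = ((n:ℝ)+1+1) * (((m:ℝ)+1) * PowerSeries.coeff (r+1) (Pp m (n+1))) +
             ((m:ℝ)+1) * PowerSeries.coeff r (Pp m (n+1+1)) := by rw [h]; ring
        _ ≤ _ := add_le_add (mul_le_mul_of_nonneg_left ih hp.le) h2

lemma coeff_Pp_le_Hh (m r n : ℕ) : PowerSeries.coeff r (Pp m (n+1)) ≤ Hh r (n+1) := by
  have h := coeff_Pp_le m r n
  have h0 := coeff_Pp_nonneg m r (n+1)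
  have hm0 : (0:ℝ) ≤ m := by positivity
  nlinarith

/-- the telescoping identity -/
lemma telescope (m n : ℕ) :
    PowerSeries.C ((((n:ℝ)+1)^2)⁻¹) * (Pp m (n+1) - Pp (m+1) (n+1)) =
    Vv ((m:ℝ)+1) * (PowerSeries.C (((n:ℝ)+1)⁻¹) * Pp m (n+1)
      - PowerSeries.C (((n:ℝ)+1+1)⁻¹) * Pp m (n+2)) := by
  have h1 := Pp_shift m (n+1)
  have h2 := Pp_succ_mul m (n+1)
  have h3 := Vv_mul_uu ((m:ℝ)+1) (by positivity)
  have h4 := Vv_mul_uu ((n:ℝ)+1+1+m) (by positivity)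
  push_cast at h1 h2
  have hu : uu ((n:ℝ)+1+1+m) = uu ((m:ℝ)+1) + PowerSeries.C ((n:ℝ)+1) := by
    simp only [uu, map_add]; ring
  have c1 : PowerSeries.C (((n:ℝ)+1)⁻¹) * PowerSeries.C ((n:ℝ)+1) = 1 := by
    rw [← map_mul, inv_mul_cancel₀ (by positivity), map_one]
  have c2 : PowerSeries.C (((n:ℝ)+1+1)⁻¹) * PowerSeries.C ((n:ℝ)+1+1) = 1 := by
    rw [← map_mul, inv_mul_cancel₀ (by positivity), map_one]
  have c3 : PowerSeries.C ((((n:ℝ)+1)^2)⁻¹) =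
     PowerSeries.C (((n:ℝ)+1)⁻¹) * PowerSeries.C (((n:ℝ)+1)⁻¹) := by
    rw [← map_mul]; congr 1; rw [sq, mul_inv]
  rw [c3]
  set a := PowerSeries.C (((n:ℝ)+1)⁻¹)
  set b := PowerSeries.C (((n:ℝ)+1+1)⁻¹)
  set A := PowerSeries.C ((n:ℝ)+1)
  set B := PowerSeries.C ((n:ℝ)+1+1)
  set v := Vv ((m:ℝ)+1)
  set u := uu ((m:ℝ)+1)
  set w := uu ((n:ℝ)+1+1+m)
  set w' := Vv ((n:ℝ)+1+1+m)
  have hw : w ≠ 0 := by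
    intro h0
    rw [h0, mul_zero] at h4
    exact zero_ne_one h4
  have hA : A ≠ 0 := by
    intro h0
    rw [h0, mul_zero] at c1
    exact zero_ne_one c1
  have L : a * a * (Pp m (n+1) - Pp (m+1) (n+1)) * w = a * Pp m (n+1) := by
    rw [hu] at h1 ⊢
    linear_combination (-a * a) * h1 + a * Pp m (n+1) * c1
  have R : v * (a * Pp m (n+1) - b * Pp m (n+2)) * w = a * Pp m (n+1) := by
    have h2' : Pp m (n+2) * w = B * Pp m (n+1) := h2
    have : v * (a * Pp m (n+1) - b * Pp m (n+2)) * w =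
       v * (a * Pp m (n+1) * w - Pp m (n+1)) := by
      linear_combination (-v * b) * h2' - v * Pp m (n+1) * c2
    rw [this, hu]
    linear_combination a * Pp m (n+1) * h3 + v * Pp m (n+1) * c1
  exact mul_right_cancel₀ hw (L.trans R.symm)

lemma Pp_one (m : ℕ) : Pp m 1 = Vv ((m:ℝ)+1) := by
  rw [Pp_succ]
  simp [Pp, add_comm]

lemma coeff_Vv_sq (a : ℝ) (r : ℕ) :
    PowerSeries.coeff r (Vv a * Vv a) = (r+1) * (a ^ (r+2))⁻¹ := by
  rw [PowerSeries.coeff_mul]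
  simp only [Vv, PowerSeries.coeff_mk]
  rw [Finset.sum_congr rfl (g := fun _ => (a ^ (r+2))⁻¹)]
  · simp
  · intro p hp
    have := Finset.HasAntidiagonal.mem_antidiagonal.1 hp
    rw [← mul_inv, ← pow_add]
    congr 2
    omega

lemma coeff_div_tendsto (m r : ℕ) : Filter.Tendsto
    (fun n : ℕ => ((n:ℝ)+1)⁻¹ * PowerSeries.coeff r (Pp m (n+1))) Filter.atTop (nhds 0) := by
  have h1 : Filter.Tendsto (fun n : ℕ => 2 ^ r * (Real.sqrt ((n:ℝ)+1))⁻¹) Filter.atTop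
      (nhds (2 ^ r * 0)) := by
    apply Filter.Tendsto.const_mul
    apply Filter.Tendsto.inv_tendsto_atTop
    apply Real.tendsto_sqrt_atTop.comp
    exact Filter.tendsto_atTop_add_const_right _ _ tendsto_natCast_atTop_atTop
  rw [mul_zero] at h1
  refine squeeze_zero (fun n => mul_nonneg (by positivity) (coeff_Pp_nonneg _ _ _)) ?_ h1
  intro n
  have h2 := (coeff_Pp_le_Hh m r n).trans (Hh_le_sqrt r (n+1) (by omega))
  have hp : (0:ℝ) < (n:ℝ)+1 := by positivity
  have hs : Real.sqrt ((n:ℝ)+1) * Real.sqrt ((n:ℝ)+1) = (n:ℝ)+1 :=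
    Real.mul_self_sqrt hp.le
  push_cast at h2
  rw [inv_mul_le_iff₀ hp]
  calc _ ≤ _ := h2
    _ = 2 ^ r * (Real.sqrt ((n:ℝ)+1) * Real.sqrt ((n:ℝ)+1) * (Real.sqrt ((n:ℝ)+1))⁻¹) := by
      field_simp
    _ = _ := by rw [hs]; ring

lemma summable_Hh (r : ℕ) : Summable fun n : ℕ => (((n:ℝ)+1)^2)⁻¹ * Hh r (n+1) := by
  have hs : Summable (fun n : ℕ => 2 ^ r * (((n+1 : ℕ):ℝ) ^ (3/2 : ℝ))⁻¹) := by
    apply Summable.mul_left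
    exact (summable_nat_add_iff 1).2 (Real.summable_nat_rpow_inv.2 (by norm_num : (1:ℝ) < 3/2))
  refine Summable.of_nonneg_of_le (fun n => mul_nonneg (by positivity) (Hh_nonneg _ _)) ?_ hs
  intro n
  have h := Hh_le_sqrt r (n+1) (by omega)
  have hp : (0:ℝ) < (n:ℝ)+1 := by positivity
  push_cast at h ⊢
  have e : ((n:ℝ)+1)^2 = ((n:ℝ)+1)^(3/2:ℝ) * Real.sqrt ((n:ℝ)+1) := by
    rw [Real.sqrt_eq_rpow, ← Real.rpow_add hp]
    norm_num
  have hsp : 0 < Real.sqrt ((n:ℝ)+1) := Real.sqrt_pos.2 hp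
  have hrp : 0 < ((n:ℝ)+1)^(3/2:ℝ) := Real.rpow_pos_of_pos hp _
  calc _ ≤ (((n:ℝ)+1)^2)⁻¹ * (2 ^ r * Real.sqrt ((n:ℝ)+1)) := by gcongr
    _ = _ := by rw [e]; field_simp

lemma summable_Pp (m r : ℕ) :
    Summable fun n : ℕ => (((n:ℝ)+1)^2)⁻¹ * PowerSeries.coeff r (Pp m (n+1)) := by
  refine Summable.of_nonneg_of_le (fun n => mul_nonneg (by positivity) (coeff_Pp_nonneg _ _ _)) ?_
    (summable_Hh r)
  intro n
  exact mul_le_mul_of_nonneg_left (coeff_Pp_le_Hh m r n) (by positivity)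

lemma step_eq (m r : ℕ) :
    (∑' n : ℕ, (((n:ℝ)+1)^2)⁻¹ * PowerSeries.coeff r (Pp m (n+1))) -
    (∑' n : ℕ, (((n:ℝ)+1)^2)⁻¹ * PowerSeries.coeff r (Pp (m+1) (n+1))) =
    (r+1) * (((m:ℝ)+1) ^ (r+2))⁻¹ := by
  rw [← (summable_Pp m r).tsum_sub (summable_Pp (m+1) r)]
  have hS := ((summable_Pp m r).sub (summable_Pp (m+1) r)).hasSum.tendsto_sum_nat
  refine tendsto_nhds_unique hS ?_
  set Q : ℕ → PowerSeries ℝ := fun n => PowerSeries.C (((n:ℝ)+1)⁻¹) * Pp m (n+1) with hQ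
  have hsum : ∀ N : ℕ, ∑ n ∈ Finset.range N, ((((n:ℝ)+1)^2)⁻¹ * PowerSeries.coeff r (Pp m (n+1)) -
      (((n:ℝ)+1)^2)⁻¹ * PowerSeries.coeff r (Pp (m+1) (n+1))) =
      (r+1) * (((m:ℝ)+1) ^ (r+2))⁻¹ - PowerSeries.coeff r (Vv ((m:ℝ)+1) * Q N) := by
    intro N
    have ht : ∀ n : ℕ, ((((n:ℝ)+1)^2)⁻¹ * PowerSeries.coeff r (Pp m (n+1)) -
      (((n:ℝ)+1)^2)⁻¹ * PowerSeries.coeff r (Pp (m+1) (n+1))) =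
       PowerSeries.coeff r (Vv ((m:ℝ)+1) * Q n) - PowerSeries.coeff r (Vv ((m:ℝ)+1) * Q (n+1)) := by
      intro n
      have h := congrArg (PowerSeries.coeff r) (telescope m n)
      rw [PowerSeries.coeff_C_mul, map_sub, mul_sub, mul_sub, map_sub] at h
      rw [h, hQ]
      push_cast
      rfl
    rw [Finset.sum_congr rfl fun n _ => ht n,
      Finset.sum_range_sub' (fun n => PowerSeries.coeff r (Vv ((m:ℝ)+1) * Q n)) N]
    congr 1
    rw [← coeff_Vv_sq, hQ]
    simp [Pp_one]
  simp_rw [hsum]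
  have hz : Filter.Tendsto (fun N => PowerSeries.coeff r (Vv ((m:ℝ)+1) * Q N)) Filter.atTop
      (nhds 0) := by
    simp only [PowerSeries.coeff_mul]
    have : (0:ℝ) = ∑ p ∈ Finset.HasAntidiagonal.antidiagonal r, PowerSeries.coeff p.1 (Vv ((m:ℝ)+1)) * 0 := by simp
    rw [this]
    apply tendsto_finsetSum
    intro p _
    apply Filter.Tendsto.const_mul
    simp only [hQ, PowerSeries.coeff_C_mul]
    exact coeff_div_tendsto m p.2
  simpa using hz.const_sub ((r+1) * (((m:ℝ)+1) ^ (r+2))⁻¹)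

lemma tsum_Hh (r : ℕ) : ∑' n : ℕ, (((n:ℝ)+1)^2)⁻¹ * Hh r (n+1) =
    (r+1) * ∑' n : ℕ+, ((n : ℝ) ^ (r + 2))⁻¹ := by
  set F : ℕ → ℝ := fun m => ∑' n : ℕ, (((n:ℝ)+1)^2)⁻¹ * PowerSeries.coeff r (Pp m (n+1)) with hF
  have h0 : ∑' n : ℕ, (((n:ℝ)+1)^2)⁻¹ * Hh r (n+1) = F 0 := by
    simp only [hF, coeff_Pp_eq_Hh]
  have hlim : Filter.Tendsto F Filter.atTop (nhds 0) := by
    have h1 : Filter.Tendsto (fun m : ℕ => ((m:ℝ)+1)⁻¹ * F 0) Filter.atTop (nhds (0 * F 0)) := by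
      apply Filter.Tendsto.mul_const
      apply Filter.Tendsto.inv_tendsto_atTop
      exact Filter.tendsto_atTop_add_const_right _ _ tendsto_natCast_atTop_atTop
    rw [zero_mul] at h1
    refine squeeze_zero (fun m => tsum_nonneg fun n =>
      mul_nonneg (by positivity) (coeff_Pp_nonneg _ _ _)) ?_ h1
    intro m
    rw [← h0, ← tsum_mul_left]
    refine (summable_Pp m r).tsum_le_tsum ?_ ((summable_Hh r).mul_left _)
    intro n
    have hp : (0:ℝ) < (m:ℝ)+1 := by positivity
    rw [mul_left_comm]
    apply mul_le_mul_of_nonneg_left _ (by positivity)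
    rw [le_inv_mul_iff₀ hp]
    exact coeff_Pp_le m r n
  have hsum : ∀ M, ∑ m ∈ Finset.range M, ((r:ℝ)+1) * (((m:ℝ)+1) ^ (r+2))⁻¹ = F 0 - F M := by
    intro M
    rw [← Finset.sum_range_sub' F M]
    exact Finset.sum_congr rfl fun m _ => (step_eq m r).symm
  have hHS : HasSum (fun m : ℕ => ((r:ℝ)+1) * (((m:ℝ)+1) ^ (r+2))⁻¹) (F 0) := by
    rw [hasSum_iff_tendsto_nat_of_nonneg (fun m => by positivity)]
    simp_rw [hsum]
    simpa using hlim.const_sub (F 0)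
  rw [h0, ← hHS.tsum_eq, tsum_mul_left]
  congr 1
  rw [tsum_pnat_eq_tsum_succ (f := fun n : ℕ => ((n:ℝ) ^ (r+2))⁻¹)]
  push_cast
  rfl

/-! ### Tuples -/

def CondT (s : ℕ) (N : ℕ∞) (f : Fin s → ℕ) : Prop :=
  ((∀ i, 1 ≤ f i) ∧ ∀ i j : Fin s, i ≤ j → f j ≤ f i) ∧ ∀ i, ((f i : ℕ) : ℕ∞) ≤ N

open Classical in
noncomputable def Ee (k : ℕ → ℕ) (s : ℕ) (N : ℕ∞) : ENNReal :=
  ∑' f : Fin s → ℕ, if CondT s N f then ENNReal.ofReal (∏ i, (((f i : ℕ) : ℝ) ^ (k i))⁻¹) else 0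

lemma CondT_cons (s : ℕ) (N : ℕ∞) (n : ℕ) (f : Fin s → ℕ) :
    CondT (s+1) N (Fin.cons n f : Fin (s+1) → ℕ) ↔ (1 ≤ n ∧ (n:ℕ∞) ≤ N) ∧ CondT s n f := by
  constructor
  · rintro ⟨⟨h1, h2⟩, h3⟩
    refine ⟨⟨by simpa using h1 0, by simpa using h3 0⟩, ⟨fun i => by simpa using h1 i.succ,
      fun i j hij => by simpa using h2 i.succ j.succ (by simpa using hij)⟩, fun i => ?_⟩
    have := h2 0 i.succ (Fin.zero_le _)
    simp only [Fin.cons_zero, Fin.cons_succ] at this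
    exact_mod_cast this
  · rintro ⟨⟨h1, h2⟩, ⟨h3, h4⟩, h5⟩
    refine ⟨⟨?_, ?_⟩, ?_⟩
    · intro i
      refine Fin.cases ?_ (fun i => ?_) i
      · simpa using h1
      · simpa using h3 i
    · intro i j
      refine Fin.cases ?_ (fun i => ?_) i
      · refine Fin.cases ?_ (fun j => ?_) j
        · intro _; exact le_rfl
        · intro _
          simp only [Fin.cons_zero, Fin.cons_succ]
          exact_mod_cast h5 j
      · refine Fin.cases ?_ (fun j => ?_) j
        · intro h; exact absurd h (by simp)
        · intro h
          simpa using h4 i j (by simpa using h)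
    · intro i
      refine Fin.cases ?_ (fun i => ?_) i
      · simpa using h2
      · simpa using (h5 i).trans h2

lemma Ee_zero (k : ℕ → ℕ) (N : ℕ∞) : Ee k 0 N = 1 := by
  unfold Ee
  rw [tsum_eq_single (default : Fin 0 → ℕ) (fun f hf => absurd (Subsingleton.elim _ _) hf)]
  simp [CondT]

open Classical in
lemma Ee_succ (k : ℕ → ℕ) (s : ℕ) (N : ℕ∞) :
    Ee k (s+1) N = ∑' n : ℕ, if 1 ≤ n ∧ (n:ℕ∞) ≤ N then
      ENNReal.ofReal (((n:ℝ) ^ (k 0))⁻¹) * Ee (fun i => k (i+1)) s n else 0 := by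
  unfold Ee
  rw [← (Fin.consEquiv (fun _ : Fin (s+1) => ℕ)).tsum_eq, ENNReal.tsum_prod']
  congr 1
  ext n
  split_ifs with hn
  · rw [← ENNReal.tsum_mul_left]
    congr 1
    ext f
    have hc : CondT (s+1) N ((Fin.consEquiv (fun _ : Fin (s+1) => ℕ)) (n, f)) ↔ CondT s n f :=
      (CondT_cons s N n f).trans (and_iff_right hn)
    by_cases hf : CondT s n f
    · rw [if_pos (hc.2 hf), if_pos hf, ← ENNReal.ofReal_mul (by positivity), Fin.prod_univ_succ]
      simp
    · rw [if_neg (fun h => hf (hc.1 h)), if_neg hf, mul_zero]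
  · rw [ENNReal.tsum_eq_zero]
    intro f
    exact if_neg fun h => hn ((CondT_cons s N n f).1 h).1

noncomputable def UR : (ℕ → ℕ) → ℕ → ℕ → ℝ
  | _, 0, _ => 1
  | k, (s+1), n => ∑ j ∈ Finset.Icc 1 n, ((j : ℝ) ^ (k 0))⁻¹ * UR (fun i => k (i+1)) s j

lemma UR_succ (k : ℕ → ℕ) (s n : ℕ) : UR k (s+1) n =
  ∑ j ∈ Finset.Icc 1 n, ((j : ℝ) ^ (k 0))⁻¹ * UR (fun i => k (i+1)) s j := rfl

lemma UR_nonneg (s : ℕ) : ∀ k n, 0 ≤ UR k s n := by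
  induction s with
  | zero => intro k n; exact zero_le_one
  | succ s ih =>
    intro k n
    rw [UR_succ]
    exact Finset.sum_nonneg fun j _ => mul_nonneg (by positivity) (ih _ j)

lemma Ee_eq_UR (s : ℕ) : ∀ k n, Ee k s (n:ℕ) = ENNReal.ofReal (UR k s n) := by
  induction s with
  | zero => intro k n; rw [Ee_zero]; simp [UR]
  | succ s ih =>
    intro k n
    rw [Ee_succ, UR_succ, tsum_eq_sum (s := Finset.Icc 1 n),
      ENNReal.ofReal_sum_of_nonneg (fun j _ => mul_nonneg (by positivity) (UR_nonneg _ _ j))]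
    · apply Finset.sum_congr rfl
      intro j hj
      have := Finset.mem_Icc.1 hj
      rw [if_pos ⟨this.1, by exact_mod_cast this.2⟩, ih, ENNReal.ofReal_mul (by positivity)]
    · intro j hj
      rw [if_neg]
      rintro ⟨h1, h2⟩
      exact hj (Finset.mem_Icc.2 ⟨h1, by exact_mod_cast h2⟩)

lemma zetaStar_eq_Ee (k : ℕ → ℕ) (s : ℕ) :
    zetaStar (fun i : Fin s => k i) = (Ee k s ⊤).toReal := by
  classical
  have : Ee k s ⊤ = ∑' f : DecTuple s,
      ENNReal.ofReal (∏ i, (((f : Fin s → ℕ) i : ℝ) ^ (k i))⁻¹) := by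
    rw [tsum_subtype (DecTuple s)
      (fun f : Fin s → ℕ => ENNReal.ofReal (∏ i, ((f i : ℝ) ^ (k i))⁻¹))]
    unfold Ee
    congr 1
    ext f
    simp only [Set.indicator_apply, CondT, DecTuple, Set.mem_ofPred_eq, le_top, implies_true,
      and_true]
  rw [this, ENNReal.tsum_toReal_eq (fun _ => ENNReal.ofReal_ne_top)]
  unfold zetaStar
  congr 1
  ext f
  rw [ENNReal.toReal_ofReal]
  exact Finset.prod_nonneg fun i _ => by positivity

lemma zetaStar_succ (k : ℕ → ℕ) (s : ℕ) (hk : k 0 = 2) :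
    zetaStar (fun i : Fin (s+1) => k i) =
      ∑' n : ℕ, (((n:ℝ)+1)^2)⁻¹ * UR (fun i => k (i+1)) s (n+1) := by
  rw [zetaStar_eq_Ee, Ee_succ, tsum_eq_zero_add' ENNReal.summable]
  simp only [le_top, and_true, Nat.le_add_left, if_true, Ee_eq_UR, hk]
  rw [if_neg (by omega), zero_add, ENNReal.tsum_toReal_eq
    (fun _ => ENNReal.mul_ne_top ENNReal.ofReal_ne_top ENNReal.ofReal_ne_top)]
  congr 1
  ext n
  rw [ENNReal.toReal_mul, ENNReal.toReal_ofReal (by positivity),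
    ENNReal.toReal_ofReal (UR_nonneg _ _ _)]
  push_cast
  rfl

lemma UR_one (t : ℕ) : ∀ n, UR (fun _ => 1) t n = Hh t n := by
  induction t with
  | zero => intro n; rfl
  | succ t ih =>
    intro n
    rw [UR_succ, Hh_succ]
    simp only [ih, pow_one]

def Kk (a : ℕ) : ℕ → ℕ := fun i => if i = a then 2 else 1

lemma UR_Kk_zero (t n : ℕ) : UR (Kk 0) (t+1) n =
    ∑ j ∈ Finset.Icc 1 n, ((j : ℝ) ^ 2)⁻¹ * Hh t j := by
  have : (fun i => Kk 0 (i+1)) = fun _ => 1 := by ext i; simp [Kk]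
  rw [UR_succ, this]
  simp only [UR_one]
  simp [Kk]

lemma UR_Kk_succ (a s n : ℕ) : UR (Kk (a+1)) (s+1) n =
    ∑ j ∈ Finset.Icc 1 n, (j : ℝ)⁻¹ * UR (Kk a) s j := by
  have : (fun i => Kk (a+1) (i+1)) = Kk a := by ext i; simp [Kk]
  rw [UR_succ, this]
  simp [Kk]

lemma UR_Kk_le (a t : ℕ) : ∀ n, UR (Kk a) (t+1+a) n ≤ Hh (a+1) n := by
  induction a with
  | zero =>
    intro n
    rw [add_zero, UR_Kk_zero, Hh_succ]
    apply Finset.sum_le_sum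
    intro j hj
    have h1 := (Finset.mem_Icc.1 hj).1
    have h2 := Hh_le t j h1
    have hp : (0:ℝ) < j := by exact_mod_cast h1
    rw [Hh_zero, inv_mul_le_iff₀ (by positivity)]
    calc _ ≤ _ := h2
      _ = _ := by field_simp
  | succ a ih =>
    intro n
    rw [← add_assoc, UR_Kk_succ, Hh_succ]
    apply Finset.sum_le_sum
    intro j _
    exact mul_le_mul_of_nonneg_left (ih j) (by positivity)

lemma UR_Kk_tendsto (a : ℕ) : ∀ n, Filter.Tendsto (fun t => UR (Kk a) (t+1+a) n) Filter.atTop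
    (nhds (Hh (a+1) n)) := by
  induction a with
  | zero =>
    intro n
    simp only [add_zero, UR_Kk_zero, Hh_succ]
    apply tendsto_finsetSum
    intro j hj
    obtain ⟨i, rfl⟩ := Nat.exists_eq_add_of_le' (Finset.mem_Icc.1 hj).1
    have h := (Hh_tendsto i).const_mul ((((i+1:ℕ):ℝ)^2)⁻¹)
    convert h using 2
    rw [Hh_zero]
    push_cast
    field_simp
  | succ a ih =>
    intro n
    simp only [← add_assoc, UR_Kk_succ, Hh_succ (a+1)]
    apply tendsto_finsetSum
    intro j _
    exact (ih j).const_mul _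

/-- the infinite multiple zeta-star value with index
(2, {1}^{r−1}, 2, 1, 1, …) equals (r+1)·ζ(r+2). -/
theorem stmt10 (r : ℕ) (hr : 1 ≤ r) :
    Filter.Tendsto
      (fun s : ℕ => zetaStar (fun i : Fin s =>
        if (i : ℕ) = 0 ∨ (i : ℕ) = r then 2 else 1))
      Filter.atTop
      (nhds ((r + 1) * ∑' n : ℕ+, ((n : ℝ) ^ (r + 2))⁻¹)) := by
  obtain ⟨a, rfl⟩ := Nat.exists_eq_add_of_le' hr
  rw [← tsum_Hh (a+1), ← Filter.tendsto_add_atTop_iff_nat (1+a+1)]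
  have hz : ∀ t : ℕ, zetaStar (fun i : Fin (t+(1+a+1)) =>
        if (i : ℕ) = 0 ∨ (i : ℕ) = a+1 then 2 else 1) =
      ∑' n : ℕ, (((n:ℝ)+1)^2)⁻¹ * UR (Kk a) (t+1+a) (n+1) := by
    intro t
    have h := zetaStar_succ (fun i => if i = 0 ∨ i = a+1 then 2 else 1) (t+1+a) (by simp)
    have hk : (fun i => (fun i => if i = 0 ∨ i = a+1 then 2 else 1) (i+1)) = Kk a := by
      ext i; simp [Kk]
    rw [hk] at h
    have e : t + (1+a+1) = t+1+a+1 := by omega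
    rw [e]
    exact h
  simp_rw [hz]
  refine tendsto_tsum_of_dominated_convergence (summable_Hh (a+1)) ?_ ?_
  · intro n
    exact (UR_Kk_tendsto a (n+1)).const_mul _
  · refine Filter.Eventually.of_forall fun t n => ?_
    rw [Real.norm_of_nonneg (mul_nonneg (by positivity) (UR_nonneg _ _ _))]
    exact mul_le_mul_of_nonneg_left (UR_Kk_le a t (n+1)) (by positivity)
end

section
/- For any admissible index (k_1, …, k_r) and any integer q ≥ 1, the infinite multiple zeta-star value satisfies ζ*(k_1, …, k_r, {q}^∞) = Σ_{n_1 ≥ ⋯ ≥ n_r ≥ 1} (1/(n_1^{k_1} ⋯ n_r^{k_r})) · ∏_{n=2}^{n_r} (1 − 1/n^q)^{−1}, where the inner product is 1 when n_r = 1. -/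
open scoped BigOperators

/-- Weighted star sums, with the weight applied to the last (smallest) entry. -/
noncomputable def wT (N : ℕ) (kk : ℕ → ℕ) (v : ℕ → ℝ) : ENNReal :=
  ∑' f : DecTuple (N + 1), ENNReal.ofReal
    ((∏ i : Fin (N + 1), (((f : Fin (N + 1) → ℕ) i : ℝ) ^ (kk i))⁻¹) * v ((f : Fin (N + 1) → ℕ) (Fin.last N)))

/-- Summation operator. -/
noncomputable def wPhi (q : ℕ) (v : ℕ → ℝ) : ℕ → ℝ :=
  fun m => ∑ j ∈ Finset.Icc 1 m, ((j : ℝ) ^ q)⁻¹ * v j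

/-- Splitting off the last entry. -/
def peelEquiv (N : ℕ) : DecTuple (N + 2) ≃
    Σ f : DecTuple (N + 1), Finset.Icc 1 ((f : Fin (N + 1) → ℕ) (Fin.last N)) where
  toFun f := ⟨⟨fun i => f.1 i.castSucc, fun i => f.2.1 _, fun i j h => f.2.2 _ _ (by simpa using h)⟩,
    ⟨f.1 (Fin.last (N + 1)), Finset.mem_Icc.2 ⟨f.2.1 _, f.2.2 _ _ (Fin.le_last _)⟩⟩⟩
  invFun p := ⟨Fin.snoc (α := fun _ => ℕ) p.1.1 p.2.1, by
    have h2 := Finset.mem_Icc.1 p.2.2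
    constructor
    · intro i
      refine Fin.lastCases ?_ (fun i => ?_) i
      · simpa using h2.1
      · simpa using p.1.2.1 i
    · intro i j
      refine Fin.lastCases ?_ (fun i => ?_) i
      · refine Fin.lastCases ?_ (fun j => ?_) j
        · simp
        · intro h
          exact absurd h (not_le.2 (Fin.castSucc_lt_last j))
      · refine Fin.lastCases ?_ (fun j => ?_) j
        · intro _
          simpa using h2.2.trans (p.1.2.2 i (Fin.last N) (Fin.le_last _))
        · intro h
          simpa using p.1.2.2 i j (by simpa using h)⟩
  left_inv f := by
    apply Subtype.ext
    funext i
    refine Fin.lastCases ?_ (fun i => ?_) i <;> simp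
  right_inv p := by
    obtain ⟨⟨f, hf⟩, ⟨j, hj⟩⟩ := p
    have h1 : (fun i : Fin (N + 1) => (Fin.snoc (α := fun _ => ℕ) f j : Fin (N + 2) → ℕ) i.castSucc) = f := by
      funext i; simp
    refine Sigma.ext (Subtype.ext h1) ?_
    simp only [Fin.snoc_last]
    congr 1 <;> simp

lemma wT_peel (N : ℕ) (kk : ℕ → ℕ) (v : ℕ → ℝ) (hv : ∀ m, 0 ≤ v m) :
    wT (N + 1) kk v = wT N kk (wPhi (kk (N + 1)) v) := by
  unfold wT
  rw [← (peelEquiv N).symm.tsum_eq, ENNReal.tsum_sigma']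
  refine tsum_congr fun f => ?_
  rw [tsum_fintype]
  simp only [wPhi]
  rw [Finset.mul_sum, ENNReal.ofReal_sum_of_nonneg]
  · rw [← Finset.sum_coe_sort (Finset.Icc 1 ((f : Fin (N + 1) → ℕ) (Fin.last N)))]
    refine Finset.sum_congr rfl fun j _ => ?_
    simp only [peelEquiv, Equiv.coe_fn_symm_mk]
    rw [Fin.prod_univ_castSucc]
    simp [mul_assoc]
  · intro j _
    have := hv j
    positivity

lemma wPhi_nonneg {q : ℕ} {v : ℕ → ℝ} (hv : ∀ m, 0 ≤ v m) (m : ℕ) : 0 ≤ wPhi q v m :=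
  Finset.sum_nonneg fun j _ => mul_nonneg (by positivity) (hv j)

lemma wT_iter (N q s : ℕ) (kk : ℕ → ℕ) (hk : ∀ i, N < i → kk i = q) (v : ℕ → ℝ)
    (hv : ∀ m, 0 ≤ v m) : wT (N + s) kk v = wT N kk ((wPhi q)^[s] v) := by
  induction s generalizing v with
  | zero => rfl
  | succ s ih =>
    rw [← add_assoc, wT_peel _ _ _ hv, hk _ (by omega), ih _ (wPhi_nonneg hv)]
    rfl

lemma zetaStar_eq (M N : ℕ) (h : M = N + 1) (kk : ℕ → ℕ) :
    zetaStar (fun i : Fin M => kk i) = (wT N kk (fun _ => 1)).toReal := by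
  subst h
  unfold zetaStar wT
  rw [ENNReal.tsum_toReal_eq (fun _ => ENNReal.ofReal_ne_top)]
  refine tsum_congr fun f => ?_
  rw [ENNReal.toReal_ofReal (by positivity), mul_one]

lemma wT_mono (N : ℕ) (kk : ℕ → ℕ) (v w : ℕ → ℝ) (h : ∀ m, 1 ≤ m → v m ≤ w m) :
    wT N kk v ≤ wT N kk w := by
  refine ENNReal.tsum_le_tsum fun f => ENNReal.ofReal_le_ofReal ?_
  exact mul_le_mul_of_nonneg_left (h _ (f.2.1 _)) (by positivity)

lemma wT_base (kk : ℕ → ℕ) (v g : ℕ → ℝ) (hg : Summable g)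
    (h : ∀ m : ℕ, 1 ≤ m → ((m : ℝ) ^ (kk 0))⁻¹ * v m ≤ g m) : wT 0 kk v ≠ ⊤ := by
  have h1 : wT 0 kk v ≤ ∑' f : DecTuple (0 + 1), ENNReal.ofReal (g ((f : Fin 1 → ℕ) 0)) := by
    refine ENNReal.tsum_le_tsum fun f => ENNReal.ofReal_le_ofReal ?_
    simpa using h _ (f.2.1 0)
  have hinj : Function.Injective (fun f : DecTuple (0 + 1) => (f : Fin 1 → ℕ) 0) := by
    intro a b hab
    apply Subtype.ext
    funext i
    have : i = 0 := Fin.ext (by omega)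
    subst this
    exact hab
  have h2 := ENNReal.tsum_comp_le_tsum_of_injective hinj (fun n => ENNReal.ofReal (g n))
  exact ne_top_of_le_ne_top hg.tsum_ofReal_ne_top (h1.trans h2)

lemma sum_sqrt_le (m : ℕ) : ∑ j ∈ Finset.Icc 1 m, (j : ℝ)⁻¹ * √(j : ℝ) ≤ 2 * √(m : ℝ) := by
  induction m with
  | zero => simp
  | succ m ih =>
    rw [Finset.sum_Icc_succ_top (by omega)]
    have ha : 0 ≤ √(m : ℝ) := Real.sqrt_nonneg _
    have hb : 0 < √((m + 1 : ℕ) : ℝ) := Real.sqrt_pos.2 (by positivity)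
    have hab : √(m : ℝ) ≤ √((m + 1 : ℕ) : ℝ) := Real.sqrt_le_sqrt (by push_cast; linarith)
    have ha2 : √(m : ℝ) ^ 2 = m := Real.sq_sqrt (by positivity)
    have hb2 : √((m + 1 : ℕ) : ℝ) ^ 2 = m + 1 := by rw [Real.sq_sqrt (by positivity)]; push_cast; ring
    have h3 : (((m + 1 : ℕ) : ℝ))⁻¹ * √((m + 1 : ℕ) : ℝ) = 1 / √((m + 1 : ℕ) : ℝ) := by
      have : ((m + 1 : ℕ) : ℝ) = √((m + 1 : ℕ) : ℝ) ^ 2 := by rw [hb2]; push_cast; ring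
      rw [eq_div_iff hb.ne', mul_assoc, ← sq, ← this]
      exact inv_mul_cancel₀ (by positivity)
    rw [h3]
    have h4 : 1 / √((m + 1 : ℕ) : ℝ) ≤ 2 * (√((m + 1 : ℕ) : ℝ) - √(m : ℝ)) := by
      rw [div_le_iff₀ hb]
      nlinarith
    linarith

lemma inv_pow_le_inv_pow {j a b : ℕ} (hj : 1 ≤ j) (hab : a ≤ b) :
    ((j : ℝ) ^ b)⁻¹ ≤ ((j : ℝ) ^ a)⁻¹ := by
  have : (1 : ℝ) ≤ j := by exact_mod_cast hj
  exact inv_anti₀ (by positivity) (pow_le_pow_right₀ this hab)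

lemma wT_sqrt_ne_top (N : ℕ) (kk : ℕ → ℕ) (h0 : 2 ≤ kk 0) (h1 : ∀ i, 1 ≤ kk i)
    (v : ℕ → ℝ) (hv : ∀ m, 0 ≤ v m) (C : ℝ) (hC : 0 ≤ C) (h : ∀ m : ℕ, 1 ≤ m → v m ≤ C * √(m : ℝ)) :
    wT N kk v ≠ ⊤ := by
  induction N generalizing v C with
  | zero =>
    refine wT_base kk v (fun m => C * (1 / (m : ℝ) ^ (3 / 2 : ℝ)))
      ((Real.summable_one_div_nat_rpow.2 (by norm_num)).mul_left C) ?_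
    intro m hm
    have hm' : (0 : ℝ) < m := by exact_mod_cast hm
    have e : 1 / (m : ℝ) ^ (3 / 2 : ℝ) = ((m : ℝ) ^ 2)⁻¹ * √(m : ℝ) := by
      rw [Real.sqrt_eq_rpow, one_div, ← Real.rpow_neg hm'.le, ← Real.rpow_natCast, ← Real.rpow_neg hm'.le,
        ← Real.rpow_add hm']
      norm_num
    rw [e]
    calc _ ≤ ((m : ℝ) ^ 2)⁻¹ * (C * √(m : ℝ)) :=
          mul_le_mul (inv_pow_le_inv_pow hm h0) (h m hm) (hv m) (by positivity)
      _ = _ := by ring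
  | succ N ih =>
    rw [wT_peel _ _ _ hv]
    refine ih _ (wPhi_nonneg hv) (C * 2) (by positivity) ?_
    intro m hm
    calc wPhi (kk (N + 1)) v m ≤ ∑ j ∈ Finset.Icc 1 m, C * ((j : ℝ)⁻¹ * √(j : ℝ)) := by
          refine Finset.sum_le_sum fun j hj => ?_
          have hj1 := (Finset.mem_Icc.1 hj).1
          have := inv_pow_le_inv_pow hj1 (h1 (N + 1))
          rw [pow_one] at this
          calc _ ≤ (j : ℝ)⁻¹ * (C * √(j : ℝ)) :=
                mul_le_mul this (h j hj1) (hv j) (by positivity)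
            _ = _ := by ring
      _ ≤ C * (2 * √(m : ℝ)) := by
          rw [← Finset.mul_sum]
          exact mul_le_mul_of_nonneg_left (sum_sqrt_le m) hC
      _ = _ := by ring

lemma one_le_sqrt_nat {j : ℕ} (hj : 1 ≤ j) : 1 ≤ √(j : ℝ) := by
  rw [Real.one_le_sqrt]; exact_mod_cast hj

lemma wT_id_ne_top (N : ℕ) (kk : ℕ → ℕ) (h0 : 2 ≤ kk 0) (h1 : ∀ i, 1 ≤ kk i)
    (hne : ¬ (kk 0 = 2 ∧ ∀ i, 1 ≤ i → i ≤ N → kk i = 1)) :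
    wT N kk (fun m => (m : ℝ)) ≠ ⊤ := by
  induction N with
  | zero =>
    have h3 : 3 ≤ kk 0 := by
      by_contra hlt
      exact hne ⟨by omega, fun i _ _ => by omega⟩
    refine wT_base kk _ (fun m => 1 / (m : ℝ) ^ 2) (Real.summable_one_div_nat_pow.2 (by norm_num)) ?_
    intro m hm
    have hm' : (0 : ℝ) < m := by exact_mod_cast hm
    calc _ ≤ ((m : ℝ) ^ 3)⁻¹ * m :=
          mul_le_mul_of_nonneg_right (inv_pow_le_inv_pow hm h3) hm'.le
      _ = _ := by field_simp
  | succ N ih =>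
    rw [wT_peel _ _ _ (fun m => by positivity)]
    by_cases hk : kk (N + 1) = 1
    · refine ne_top_of_le_ne_top (ih ?_) (wT_mono N kk _ _ ?_)
      · rintro ⟨ha, hb⟩
        refine hne ⟨ha, fun i hi hi2 => ?_⟩
        rcases Nat.lt_or_ge N i with h | h
        · have : i = N + 1 := by omega
          rw [this, hk]
        · exact hb i hi h
      · intro m hm
        unfold wPhi
        rw [hk]
        have : ∀ j ∈ Finset.Icc 1 m, ((j : ℝ) ^ 1)⁻¹ * (j : ℝ) = 1 := by
          intro j hj
          have : (0 : ℝ) < j := by exact_mod_cast (Finset.mem_Icc.1 hj).1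
          rw [pow_one, inv_mul_cancel₀ this.ne']
        rw [Finset.sum_congr rfl this]
        simp
    · have hk2 : 2 ≤ kk (N + 1) := by have := h1 (N + 1); omega
      refine wT_sqrt_ne_top N kk h0 h1 _ (wPhi_nonneg fun m => by positivity) 2 (by norm_num) ?_
      intro m hm
      refine le_trans (Finset.sum_le_sum fun j hj => ?_) (sum_sqrt_le m)
      have hj1 := (Finset.mem_Icc.1 hj).1
      have hj' : (0 : ℝ) < j := by exact_mod_cast hj1
      calc _ ≤ ((j : ℝ) ^ 2)⁻¹ * j :=
            mul_le_mul_of_nonneg_right (inv_pow_le_inv_pow hj1 hk2) hj'.le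
        _ = (j : ℝ)⁻¹ * 1 := by field_simp
        _ ≤ _ := mul_le_mul_of_nonneg_left (one_le_sqrt_nat hj1) (by positivity)

/-- The limiting product. -/
noncomputable def wP (q m : ℕ) : ℝ := ∏ n ∈ Finset.Icc 2 m, (1 - ((n : ℝ) ^ q)⁻¹)⁻¹

lemma factor_pos {q : ℕ} (hq : 1 ≤ q) {n : ℕ} (hn : 2 ≤ n) : 0 < 1 - ((n : ℝ) ^ q)⁻¹ := by
  have : (1 : ℝ) < n := by exact_mod_cast hn
  have := inv_lt_one_of_one_lt₀ (one_lt_pow₀ this (by omega : q ≠ 0))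
  linarith

lemma wP_nonneg {q : ℕ} (hq : 1 ≤ q) (m : ℕ) : 0 ≤ wP q m :=
  Finset.prod_nonneg fun _ hn => (inv_pos.2 (factor_pos hq (Finset.mem_Icc.1 hn).1)).le

lemma wP_one (q : ℕ) : wP q 1 = 1 := by simp [wP]

lemma wP_succ (q m : ℕ) (hm : 1 ≤ m) :
    wP q (m + 1) = wP q m * (1 - (((m + 1 : ℕ) : ℝ) ^ q)⁻¹)⁻¹ := by
  unfold wP
  rw [Finset.prod_Icc_succ_top (by omega)]

lemma wP_rec {q m : ℕ} (hq : 1 ≤ q) (hm : 1 ≤ m) :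
    wP q (m + 1) = wP q m + (((m + 1 : ℕ) : ℝ) ^ q)⁻¹ * wP q (m + 1) := by
  rw [wP_succ q m hm]
  have := factor_pos hq (show 2 ≤ m + 1 by omega)
  generalize (((m + 1 : ℕ) : ℝ) ^ q)⁻¹ = x at *
  field_simp
  ring

lemma wPhi_succ (q : ℕ) (v : ℕ → ℝ) (m : ℕ) :
    wPhi q v (m + 1) = wPhi q v m + (((m + 1 : ℕ) : ℝ) ^ q)⁻¹ * v (m + 1) := by
  unfold wPhi
  rw [Finset.sum_Icc_succ_top (by omega)]

lemma wPhi_wP {q m : ℕ} (hq : 1 ≤ q) (hm : 1 ≤ m) : wPhi q (wP q) m = wP q m := by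
  induction m, hm using Nat.le_induction with
  | base => simp [wPhi, wP]
  | succ m hm ih => rw [wPhi_succ, ih, ← wP_rec hq hm]

lemma wPhi_mono {q : ℕ} {v w : ℕ → ℝ} (h : ∀ m, 1 ≤ m → v m ≤ w m) (m : ℕ) :
    wPhi q v m ≤ wPhi q w m :=
  Finset.sum_le_sum fun j hj =>
    mul_le_mul_of_nonneg_left (h j (Finset.mem_Icc.1 hj).1) (by positivity)

/-- Complete homogeneous sums. -/
noncomputable def wH (q s : ℕ) : ℕ → ℝ := (wPhi q)^[s] (fun _ => 1)

lemma wH_succ (q s : ℕ) : wH q (s + 1) = wPhi q (wH q s) :=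
  Function.iterate_succ_apply' _ _ _

lemma wH_nonneg (q s m : ℕ) : 0 ≤ wH q s m := by
  induction s generalizing m with
  | zero => simp [wH]
  | succ s ih => rw [wH_succ]; exact wPhi_nonneg ih m

lemma wP_ge_one {q : ℕ} (hq : 1 ≤ q) {m : ℕ} : 1 ≤ wP q m := by
  unfold wP
  refine Finset.prod_induction _ (fun x : ℝ => 1 ≤ x) (fun a b ha hb => one_le_mul_of_one_le_of_one_le ha hb) le_rfl fun n hn => ?_
  have h := factor_pos hq (Finset.mem_Icc.1 hn).1
  refine (one_le_inv₀ h).2 ?_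
  have : 0 ≤ ((n : ℝ) ^ q)⁻¹ := by positivity
  linarith

lemma wH_le {q : ℕ} (hq : 1 ≤ q) (s m : ℕ) (hm : 1 ≤ m) : wH q s m ≤ wP q m := by
  induction s generalizing m with
  | zero => exact wP_ge_one hq
  | succ s ih =>
    rw [wH_succ, ← wPhi_wP hq hm]
    exact wPhi_mono ih m

lemma wH_mono_succ (q s m : ℕ) (hm : 1 ≤ m) : wH q s m ≤ wH q (s + 1) m := by
  induction s generalizing m with
  | zero =>
    rw [wH_succ]
    have h1 : (1 : ℕ) ∈ Finset.Icc 1 m := Finset.mem_Icc.2 ⟨le_rfl, hm⟩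
    have := Finset.single_le_sum (f := fun j : ℕ => ((j : ℝ) ^ q)⁻¹ * wH q 0 j)
      (fun j _ => mul_nonneg (by positivity) (wH_nonneg q 0 j)) h1
    simpa [wH, wPhi] using this
  | succ s ih =>
    rw [wH_succ, wH_succ q (s + 1)]
    exact wPhi_mono ih m

lemma wH_tendsto {q : ℕ} (hq : 1 ≤ q) (m : ℕ) (hm : 1 ≤ m) :
    Filter.Tendsto (fun s => wH q s m) Filter.atTop (nhds (wP q m)) := by
  induction m, hm using Nat.le_induction with
  | base =>
    have : ∀ s, wH q s 1 = 1 := by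
      intro s
      induction s with
      | zero => rfl
      | succ s ih => rw [wH_succ]; simp [wPhi, ih]
    simp [this, wP_one]
  | succ m hm ih =>
    have hmono : Monotone (fun s => wH q s (m + 1)) :=
      monotone_nat_of_le_succ fun s => wH_mono_succ q s (m + 1) (by omega)
    have hbdd : BddAbove (Set.range fun s => wH q s (m + 1)) :=
      ⟨wP q (m + 1), by rintro _ ⟨s, rfl⟩; exact wH_le hq s _ (by omega)⟩
    have hL := tendsto_atTop_ciSup hmono hbdd
    generalize (⨆ s, wH q s (m + 1)) = L at hL
    have h1 := (Filter.tendsto_add_atTop_iff_nat 1).2 hL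
    have h2 := ((Filter.tendsto_add_atTop_iff_nat 1).2 ih).add
      (hL.const_mul ((((m + 1 : ℕ) : ℝ) ^ q)⁻¹))
    have h3 : (fun s => wH q (s + 1) (m + 1)) =
        fun s => wH q (s + 1) m + (((m + 1 : ℕ) : ℝ) ^ q)⁻¹ * wH q s (m + 1) := by
      funext s
      rw [wH_succ, wPhi_succ]
    rw [h3] at h1
    have h4 := tendsto_nhds_unique h1 h2
    have h5 := wP_rec hq hm
    have h6 := factor_pos hq (show 2 ≤ m + 1 by omega)
    have h7 : (1 - (((m + 1 : ℕ) : ℝ) ^ q)⁻¹) * L = (1 - (((m + 1 : ℕ) : ℝ) ^ q)⁻¹) * wP q (m + 1) := by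
      linarith
    rw [← mul_left_cancel₀ h6.ne' h7]
    exact hL

lemma wP_q_one (m : ℕ) (hm : 1 ≤ m) : wP 1 m = m := by
  induction m, hm using Nat.le_induction with
  | base => simp [wP]
  | succ m hm ih =>
    rw [wP_succ _ _ hm, ih]
    have : (0 : ℝ) < m := by exact_mod_cast hm
    have h : (1 - (((m + 1 : ℕ) : ℝ) ^ 1)⁻¹) = m / (m + 1) := by
      push_cast; field_simp; ring
    rw [h]; push_cast; field_simp

lemma wP_q_two {q : ℕ} (hq : 2 ≤ q) (m : ℕ) (hm : 1 ≤ m) : wP q m ≤ 2 * m / (m + 1) := by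
  induction m, hm using Nat.le_induction with
  | base => simp [wP]; norm_num
  | succ m hm ih =>
    rw [wP_succ _ _ hm]
    have hm0 : (0 : ℝ) < m := by exact_mod_cast hm
    have h1 := factor_pos (show 1 ≤ 2 by norm_num) (show 2 ≤ m + 1 by omega)
    have h2 : (1 - (((m + 1 : ℕ) : ℝ) ^ q)⁻¹)⁻¹ ≤ (1 - (((m + 1 : ℕ) : ℝ) ^ 2)⁻¹)⁻¹ := by
      refine inv_anti₀ h1 ?_
      have := inv_pow_le_inv_pow (show 1 ≤ m + 1 by omega) hq
      linarith
    have h3 := factor_pos (show 1 ≤ q by omega) (show 2 ≤ m + 1 by omega)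
    refine (mul_le_mul ih h2 (inv_pos.2 h3).le (by positivity)).trans (le_of_eq ?_)
    have h : (1 - (((m + 1 : ℕ) : ℝ) ^ 2)⁻¹) = m * (m + 2) / (m + 1) ^ 2 := by
      push_cast; field_simp; ring
    rw [h]; push_cast; field_simp; ring

lemma wT_wP_ne_top (N q : ℕ) (hq : 1 ≤ q) (kk : ℕ → ℕ) (h0 : 2 ≤ kk 0) (h1 : ∀ i, 1 ≤ kk i)
    (hne : q = 1 → ¬ (kk 0 = 2 ∧ ∀ i, 1 ≤ i → i ≤ N → kk i = 1)) :
    wT N kk (wP q) ≠ ⊤ := by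
  by_cases h : q = 1
  · refine ne_top_of_le_ne_top (wT_id_ne_top N kk h0 h1 (hne h)) (wT_mono _ _ _ _ fun m hm => ?_)
    rw [h, wP_q_one m hm]
  · refine wT_sqrt_ne_top N kk h0 h1 _ (wP_nonneg hq) 2 (by norm_num) fun m hm => ?_
    have ha := wP_q_two (show 2 ≤ q by omega) m hm
    have hb := one_le_sqrt_nat hm
    have hc : 2 * (m : ℝ) / (m + 1) ≤ 2 := by
      rw [div_le_iff₀ (by positivity)]; linarith
    linarith

lemma wT_toReal (N : ℕ) (kk : ℕ → ℕ) (v : ℕ → ℝ) (hv : ∀ m, 0 ≤ v m) :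
    (wT N kk v).toReal = ∑' f : DecTuple (N + 1),
      (∏ i : Fin (N + 1), (((f : Fin (N + 1) → ℕ) i : ℝ) ^ (kk i))⁻¹) *
        v ((f : Fin (N + 1) → ℕ) (Fin.last N)) := by
  unfold wT
  rw [ENNReal.tsum_toReal_eq (fun _ => ENNReal.ofReal_ne_top)]
  refine tsum_congr fun f => ?_
  rw [ENNReal.toReal_ofReal (mul_nonneg (by positivity) (hv _))]

lemma wT_summable (N : ℕ) (kk : ℕ → ℕ) (v : ℕ → ℝ) (hv : ∀ m, 0 ≤ v m) (h : wT N kk v ≠ ⊤) :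
    Summable fun f : DecTuple (N + 1) =>
      (∏ i : Fin (N + 1), (((f : Fin (N + 1) → ℕ) i : ℝ) ^ (kk i))⁻¹) *
        v ((f : Fin (N + 1) → ℕ) (Fin.last N)) := by
  have := ENNReal.summable_toReal h
  refine this.congr fun f => ?_
  rw [ENNReal.toReal_ofReal (mul_nonneg (by positivity) (hv _))]

/-- ζ*(k_1,…,k_r,{q}^∞)
= Σ_{n_1 ≥ ⋯ ≥ n_r ≥ 1} (1/(n_1^{k_1}⋯n_r^{k_r})) · ∏_{n=2}^{n_r} (1 − 1/n^q)⁻¹. -/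
theorem stmt12 (r q : ℕ) (hr : 1 ≤ r) (hq : 1 ≤ q) (k : Fin r → ℕ)
    (hadm : 2 ≤ k ⟨0, by omega⟩) (hpos : ∀ i, 1 ≤ k i)
    (hne : q = 1 → k ≠ fun i : Fin r => if (i : ℕ) = 0 then 2 else 1) :
    Filter.Tendsto
      (fun s : ℕ => zetaStar (fun i : Fin (r + s) =>
        if h : (i : ℕ) < r then k ⟨i, h⟩ else q))
      Filter.atTop
      (nhds (∑' f : DecTuple r,
        (∏ i, (((f : Fin r → ℕ) i : ℝ) ^ (k i))⁻¹) *
          ∏ n ∈ Finset.Icc 2 ((f : Fin r → ℕ) ⟨r - 1, by omega⟩),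
            (1 - ((n : ℝ) ^ q)⁻¹)⁻¹)) := by
  obtain ⟨N, rfl⟩ : ∃ N, r = N + 1 := ⟨r - 1, by omega⟩
  let kk : ℕ → ℕ := fun i => if h : i < N + 1 then k ⟨i, h⟩ else q
  have hkk : ∀ i : Fin (N + 1), kk i = k i := fun i => dif_pos i.2
  have h0 : 2 ≤ kk 0 := by simpa [kk] using hadm
  have h1 : ∀ i, 1 ≤ kk i := by
    intro i
    simp only [kk]
    split_ifs
    · exact hpos _
    · exact hq
  have hfin : wT N kk (wP q) ≠ ⊤ := by
    refine wT_wP_ne_top N q hq kk h0 h1 fun hq1 => ?_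
    rintro ⟨ha, hb⟩
    refine hne hq1 (funext fun i => ?_)
    rw [← hkk]
    split_ifs with hi
    · rw [hi, ha]
    · exact hb _ (by omega) (by omega)
  have hL : ∀ s : ℕ, zetaStar (fun i : Fin (N + 1 + s) =>
        if h : (i : ℕ) < N + 1 then k ⟨i, h⟩ else q) = ∑' f : DecTuple (N + 1),
      (∏ i : Fin (N + 1), (((f : Fin (N + 1) → ℕ) i : ℝ) ^ (kk i))⁻¹) *
        wH q s ((f : Fin (N + 1) → ℕ) (Fin.last N)) := by
    intro s
    rw [← wT_toReal N kk _ (wH_nonneg q s)]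
    refine (zetaStar_eq (N + 1 + s) (N + s) (by omega) kk).trans ?_
    rw [wT_iter N q s kk (fun i hi => by simp only [kk]; rw [dif_neg (by omega)]) _ (fun _ => zero_le_one)]
    rfl
  simp only [hL]
  have hR : (∑' f : DecTuple (N + 1),
        (∏ i, (((f : Fin (N + 1) → ℕ) i : ℝ) ^ (k i))⁻¹) *
          ∏ n ∈ Finset.Icc 2 ((f : Fin (N + 1) → ℕ) ⟨N + 1 - 1, by omega⟩),
            (1 - ((n : ℝ) ^ q)⁻¹)⁻¹) = ∑' f : DecTuple (N + 1),
      (∏ i : Fin (N + 1), (((f : Fin (N + 1) → ℕ) i : ℝ) ^ (kk i))⁻¹) *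
        wP q ((f : Fin (N + 1) → ℕ) (Fin.last N)) := by
    simp only [hkk]
    rfl
  rw [hR]
  refine tendsto_tsum_of_dominated_convergence (wT_summable N kk _ (wP_nonneg hq) hfin) ?_ ?_
  · intro f
    exact (wH_tendsto hq _ (f.2.1 _)).const_mul _
  · refine Filter.Eventually.of_forall fun s f => ?_
    rw [Real.norm_of_nonneg (mul_nonneg (by positivity) (wH_nonneg q s _))]
    exact mul_le_mul_of_nonneg_left (wH_le hq s _ (f.2.1 _)) (by positivity)
end
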